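/- arXiv:2602.02854 — 2 statements merged into one kernel-verified Lean document; each statement's English description precedes it below -/
import Mathlib

section
/- Let T be a theory in a first-order language L, and suppose T has a model N such that (i) N embeds into every model of T, and (ii) every element of N is the interpretation of some constant symbol of L. Then every model M of T in which every element is the interpretation of some constant symbol of L is isomorphic to N. In particular, any two models of T in which every element is the interpretation of a constant symbol are isomorphic. -/
open FirstOrder Language

universe u v w

/-- **Corollary apcat.**  If a first-order theory `T` has an algebraically prime model `N`
(one that embeds into every model of `T`) in which every element is named by a constant,
then every model of `T` in which every element is named by a constant is isomorphic to
`N`; in particular any two such models are isomorphic. -/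
theorem stmt_8 {L : FirstOrder.Language.{u, v}} (T : L.Theory) (N : Type w) [L.Structure N]
    (hNmod : N ⊨ T)
    (hprime : ∀ (M : Type w) [L.Structure M], M ⊨ T → Nonempty (N ↪[L] M))
    (hNnamed : ∀ x : N, ∃ c : L.Constants, (constantMap c : N) = x) :
    (∀ (M : Type w) [L.Structure M], M ⊨ T →
      (∀ x : M, ∃ c : L.Constants, (constantMap c : M) = x) → Nonempty (M ≃[L] N)) ∧
    (∀ (M₁ : Type w) [L.Structure M₁] (M₂ : Type w) [L.Structure M₂], M₁ ⊨ T → M₂ ⊨ T →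
      (∀ x : M₁, ∃ c : L.Constants, (constantMap c : M₁) = x) →
      (∀ x : M₂, ∃ c : L.Constants, (constantMap c : M₂) = x) →
      Nonempty (M₁ ≃[L] M₂)) := by
  have key : ∀ (M : Type w) [L.Structure M], M ⊨ T →
      (∀ x : M, ∃ c : L.Constants, (constantMap c : M) = x) → Nonempty (N ≃[L] M) := by
    intro M _ hM hMn
    obtain ⟨f⟩ := hprime M hM
    have hs : Function.Surjective f := by
      intro x
      obtain ⟨c, rfl⟩ := hMn x
      exact ⟨(constantMap c : N), f.map_constants c⟩
    exact ⟨{ toEquiv := Equiv.ofBijective f ⟨f.injective, hs⟩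
             map_fun' := fun g x => f.map_fun g x
             map_rel' := fun r x => f.map_rel r x }⟩
  refine ⟨fun M _ hM hn => ?_, fun M₁ _ M₂ _ h₁ h₂ n₁ n₂ => ?_⟩
  · obtain ⟨e⟩ := key M hM hn
    exact ⟨e.symm⟩
  · obtain ⟨e₁⟩ := key M₁ h₁ n₁
    obtain ⟨e₂⟩ := key M₂ h₂ n₂
    exact ⟨e₂.comp e₁.symm⟩
end

section
/- Let L be the first-order language with two unary relation symbols F and G and countably many constant symbols c₀, c₁, c₂, …, and let T be the L-theory asserting cᵢ ≠ cⱼ for all i ≠ j. Then there exists a family, indexed by the functions s : ℕ → Fin 4, of models M_s of T such that in each M_s every element is the interpretation of some constant symbol, and M_s is not isomorphic to M_t whenever s ≠ t. In particular, T has 2^ℵ₀ pairwise non-isomorphic countable models in each of which every element is named by a constant. -/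
open FirstOrder Language

/-- The language with two unary relation symbols `F`, `G` and countably many constant
symbols `c₀, c₁, c₂, …`. -/
def L16 : FirstOrder.Language :=
  ⟨fun n => match n with
    | 0 => ℕ
    | _ + 1 => Empty,
   fun n => match n with
    | 1 => Fin 2
    | 0 => Empty
    | _ + 2 => Empty⟩

/-- The `i`-th constant symbol of `L16`. -/
def c16 (i : ℕ) : L16.Constants := i

/-- The theory asserting that the constants are pairwise distinct: `cᵢ ≠ cⱼ` for `i ≠ j`. -/
def T16 : L16.Theory :=
  {σ | ∃ i j : ℕ, i ≠ j ∧ σ = ∼(Term.equal (Constants.term (c16 i)) (Constants.term (c16 j)))}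

/-- The structure on `ℕ` in which `cᵢ` is `i` and `F`, `G` read off the two bits of `s i`. -/
def S16 (s : ℕ → Fin 4) : L16.Structure ℕ where
  funMap {n} f _ := match n, f with
    | 0, f => f
    | _ + 1, f => Empty.elim f
  RelMap {n} r x := match n, r, x with
    | 1, r, x => (s (x 0)).val.testBit (Fin.val (n := 2) r) = true
    | 0, r, _ => Empty.elim r
    | _ + 2, r, _ => Empty.elim r

theorem S16_const (s : ℕ → Fin 4) (i : ℕ) :
    letI := S16 s
    ((c16 i : L16.Constants) : ℕ) = i := rfl

theorem bits16 : ∀ a b : Fin 4,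
    (∀ r : Fin 2, a.val.testBit r.val = true ↔ b.val.testBit r.val = true) → a = b := by
  decide

/-- **Continuum many named countable models (Example neccond 3).**  The theory asserting
that countably many constants are pairwise distinct, in a language with two unary
predicates `F` and `G`, has a family of pairwise non-isomorphic countable models indexed
by the functions `s : ℕ → Fin 4` (the four Boolean combinations of `F` and `G`), in each
of which every element is the interpretation of some constant symbol.  In particular it
has `2^ℵ₀` pairwise non-isomorphic countable models in which every element is named. -/
theorem stmt_16 :
    ∃ (Mf : (ℕ → Fin 4) → Type) (inst : ∀ s, L16.Structure (Mf s)),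
      (∀ s, letI := inst s
        (Mf s ⊨ T16) ∧ Countable (Mf s) ∧
          ∀ m : Mf s, ∃ c : L16.Constants, (constantMap c : Mf s) = m) ∧
      (∀ s t, s ≠ t →
        letI := inst s
        letI := inst t
        IsEmpty (Mf s ≃[L16] Mf t)) := by
  refine ⟨fun _ => ℕ, S16, fun s => ?_, fun s t hst => ?_⟩
  · letI := S16 s
    refine ⟨⟨?_⟩, inferInstanceAs (Countable ℕ), fun m => ⟨c16 m, S16_const s m⟩⟩
    rintro σ ⟨i, j, hij, rfl⟩
    rw [Sentence.Realize, Formula.realize_not, Formula.realize_equal,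
      Term.realize_constants, Term.realize_constants]
    exact hij
  · refine ⟨fun e => hst ?_⟩
    have he : ∀ i : ℕ, e.toFun i = i := fun i => by
      have h := @Language.Equiv.map_fun' L16 ℕ ℕ (S16 s) (S16 t) e 0 (c16 i) (fun k => k.elim0)
      exact h
    funext i
    refine bits16 _ _ fun r => ?_
    have h := @Language.Equiv.map_rel' L16 ℕ ℕ (S16 s) (S16 t) e 1 r (fun _ => i)
    have h' : (t (e.toFun i)).val.testBit r.val = true ↔ (s i).val.testBit r.val = true := h
    rw [he i] at h'
    exact h'.symm
end
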